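/- Let D be an integral domain with fraction field K, Q a prime ideal of D, M = D ∖ Q, and let J be a fractional s-ideal of M. Then JD is t-invertible, i.e., ((JD)·(JD)⁻¹)_t = D (with product of D-submodules of K), if and only if J is t-invertible, i.e., (J·J⁻¹)_t = M, where J·J⁻¹ = {xy | x ∈ J, y ∈ J⁻¹} and the t-closure is computed inside q(M). -/

import Mathlib

open scoped Pointwise

noncomputable section

variable (D : Type*) [CommRing D] [IsDomain D]

/-- The image in the fraction field `K` of the monoid `M = D \ Q`. -/
def monoidMK (Q : Ideal D) : Set (FractionRing D) :=
  {x | ∃ a : D, a ∉ Q ∧ x = algebraMap D (FractionRing D) a}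

/-- The quotient group `q(M) = {a·b⁻¹ | a, b ∈ M} ⊆ K` of the monoid `M = D \ Q`. -/
def quotM (Q : Ideal D) : Set (FractionRing D) :=
  {x | ∃ a b : D, a ∉ Q ∧ b ∉ Q ∧
    x = algebraMap D (FractionRing D) a / algebraMap D (FractionRing D) b}

/-- For a subset `X ⊆ q(M)`, the inverse `X⁻¹ = {x ∈ q(M) | x·X ⊆ M}`. -/
def invM (Q : Ideal D) (X : Set (FractionRing D)) : Set (FractionRing D) :=
  {x | x ∈ quotM D Q ∧ ∀ y ∈ X, x * y ∈ monoidMK D Q}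

/-- `J` is a fractional s-ideal of the monoid `M = D \ Q`: a nonempty subset of `q(M)`
with `J·M = J` such that `c·J ⊆ M` for some `c ∈ M`. -/
def IsFracSIdeal (Q : Ideal D) (J : Set (FractionRing D)) : Prop :=
  J.Nonempty ∧ J ⊆ quotM D Q ∧ J * monoidMK D Q = J ∧
    ∃ c ∈ monoidMK D Q, (c • J : Set (FractionRing D)) ⊆ monoidMK D Q

/-- The `t`-closure of a subset `X ⊆ q(M)`: the union of `E_v = (E⁻¹)⁻¹` over all finite
nonempty subsets `E ⊆ X`. -/
def tM (Q : Ideal D) (X : Set (FractionRing D)) : Set (FractionRing D) :=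
  {x | ∃ E : Set (FractionRing D), E ⊆ X ∧ E.Finite ∧ E.Nonempty ∧ x ∈ invM D Q (invM D Q E)}

/-- The `t`-closure of a `D`-submodule `N` of `K`: the union of `B_v = ((B⁻¹)⁻¹)` over all
nonzero finitely generated `D`-submodules `B ⊆ N` of `K`. -/
def tD (N : Submodule D (FractionRing D)) : Set (FractionRing D) :=
  {x | ∃ B : Submodule D (FractionRing D), B.FG ∧ B ≠ ⊥ ∧ B ≤ N ∧
    x ∈ (1 : Submodule D (FractionRing D)) / ((1 : Submodule D (FractionRing D)) / B)}

/-!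
Since `Q` is prime, `q(M)` is the unit group of the local ring `D_Q`, and `q(M) ∩ D = M`. For
nonempty `X ⊆ q(M)` with `X⁻¹ ≠ ∅` one has `(XD)⁻¹ = X⁻¹D`: an element of `(XD)⁻¹` lies in `D_Q`,
and if it is not a unit there, then adding an element of `X⁻¹` makes it one. A finite nonempty
`E ⊆ q(M)` has a common denominator in `M`, so `E⁻¹ ≠ ∅` and `E_v = q(M) ∩ (ED)_v`; hence
`X_t = q(M) ∩ (XD)_t` for every `X ⊆ q(M)`. With `X = J·J⁻¹`, for which `XD = (JD)(JD)⁻¹`, either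
form of `t`-invertibility says that `1` lies in the respective `t`-closure, and `1 ∈ q(M)`.
-/

section Span

variable {R M : Type*} [Semiring R] [AddCommMonoid M] [Module R M]

lemma nonempty_of_span_ne_bot {s : Set M} (h : Submodule.span R s ≠ ⊥) : s.Nonempty :=
  Set.nonempty_iff_ne_empty.2 fun hs => h (hs ▸ Submodule.span_empty)

lemma exists_finset_subset_le_span {B : Submodule R M} (hB : B.FG) {s : Set M}
    (h : B ≤ Submodule.span R s) :
    ∃ E : Finset M, (E : Set M) ⊆ s ∧ B ≤ Submodule.span R (E : Set M) := by
  obtain ⟨S, rfl⟩ := hB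
  obtain ⟨E, hEs, hSE⟩ := Submodule.subset_span_finite_of_subset_span (Submodule.span_le.1 h)
  exact ⟨E, hEs, Submodule.span_le.2 hSE⟩

end Span

lemma exists_finset_subset_le_span_mul {R A : Type*} [CommSemiring R] [Semiring A] [Algebra R A]
    {B N : Submodule R A} (hB : B.FG) {s : Set A} (h : B ≤ Submodule.span R s * N) :
    ∃ E : Finset A, (E : Set A) ⊆ s ∧ B ≤ Submodule.span R (E : Set A) * N := by
  classical
  rw [← Submodule.span_eq N, Submodule.span_mul_span] at h
  obtain ⟨F, hF, hBF⟩ := exists_finset_subset_le_span hB h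
  obtain ⟨E, T, hEs, hTN, hFET⟩ := Finset.subset_mul hF
  refine ⟨E, hEs, hBF.trans (Submodule.span_le.2 fun x hx => ?_)⟩
  obtain ⟨y, hy, z, hz, rfl⟩ := Finset.mem_mul.1 (hFET hx)
  exact Submodule.mul_mem_mul (Submodule.subset_span hy) (hTN hz)

section Quotient

variable {R A : Type*} [CommSemiring R] [CommSemiring A] [Algebra R A]

lemma mem_div_span_iff {I : Submodule R A} {s : Set A} {x : A} :
    x ∈ I / Submodule.span R s ↔ ∀ y ∈ s, x * y ∈ I :=
  Submodule.span_le (p := I.comap (LinearMap.mulLeft R x))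

lemma submodule_div_le_div_left {I J : Submodule R A} (h : I ≤ J) (N : Submodule R A) :
    N / J ≤ N / I :=
  fun _ hx y hy => hx y (h hy)

lemma le_one_div_one_div {I : Submodule R A} : I ≤ 1 / (1 / I) :=
  Submodule.le_div_iff_mul_le.2 Submodule.mul_one_div_le_one

lemma one_div_mul_one_div_le_one_div_mul {I J : Submodule R A} :
    1 / I * (1 / J) ≤ 1 / (I * J) := by
  rw [Submodule.le_div_iff_mul_le, mul_mul_mul_comm]
  exact mul_le_one' (Submodule.le_div_iff_mul_le.1 le_rfl) (Submodule.le_div_iff_mul_le.1 le_rfl)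

end Quotient

section CommRing

variable {R : Type*} [CommRing R]

lemma one_mem_tD_iff {N : Submodule R (FractionRing R)} :
    1 ∈ tD R N ↔ ∃ B : Submodule R (FractionRing R), B.FG ∧ B ≠ ⊥ ∧ B ≤ N ∧ 1 / B ≤ 1 := by
  simp only [tD, Set.mem_ofPred_eq, Submodule.one_mem_div]

lemma tD_eq_one_iff {N : Submodule R (FractionRing R)} (hN : N ≤ 1) :
    tD R N = (1 : Submodule R (FractionRing R)) ↔ 1 ∈ tD R N := by
  refine ⟨fun h => h ▸ Submodule.one_le.1 le_rfl, fun h => Set.Subset.antisymm ?_ ?_⟩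
  · rintro x ⟨B, -, -, hBN, hx⟩
    exact mul_one x ▸ hx 1 (Submodule.one_mem_div.2 (hBN.trans hN))
  · obtain ⟨B, hfg, hB, hBN, hB1⟩ := one_mem_tD_iff.1 h
    exact fun x hx => ⟨B, hfg, hB, hBN, Submodule.one_le_one_div.2 hB1 hx⟩

lemma nonempty_of_tD_span_mul_nonempty {X : Set (FractionRing R)}
    {N : Submodule R (FractionRing R)} (h : (tD R (Submodule.span R X * N)).Nonempty) :
    X.Nonempty := by
  obtain ⟨_, B, -, hB, hBX, -⟩ := h
  refine nonempty_of_span_ne_bot (R := R) fun hX => ne_bot_of_le_ne_bot hB hBX ?_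
  rw [hX, Submodule.bot_mul]

variable {P : Ideal R}

lemma algebraMap_ne_zero_of_notMem {a : R} (ha : a ∉ P) : algebraMap R (FractionRing R) a ≠ 0 :=
  (map_ne_zero_iff _ (IsFractionRing.injective R (FractionRing R))).2
    (ne_of_mem_of_not_mem P.zero_mem ha).symm

variable [hP : P.IsPrime]

lemma one_mem_monoidMK : (1 : FractionRing R) ∈ monoidMK R P :=
  ⟨1, hP.one_notMem, (map_one _).symm⟩

lemma mul_mem_monoidMK {x y : FractionRing R} (hx : x ∈ monoidMK R P) (hy : y ∈ monoidMK R P) :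
    x * y ∈ monoidMK R P := by
  obtain ⟨a, ha, rfl⟩ := hx
  obtain ⟨b, hb, rfl⟩ := hy
  exact ⟨a * b, hP.mul_notMem ha hb, (map_mul _ a b).symm⟩

end CommRing

section TInvertible

variable {D} {Q : Ideal D}

lemma ne_zero_of_mem_quotM {x : FractionRing D} (hx : x ∈ quotM D Q) : x ≠ 0 := by
  obtain ⟨a, b, ha, hb, rfl⟩ := hx
  exact div_ne_zero (algebraMap_ne_zero_of_notMem ha) (algebraMap_ne_zero_of_notMem hb)

lemma invM_subset_quotM (X : Set (FractionRing D)) : invM D Q X ⊆ quotM D Q :=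
  fun _ hx => hx.1

lemma mul_invM_subset_monoidMK (X : Set (FractionRing D)) : X * invM D Q X ⊆ monoidMK D Q := by
  rintro _ ⟨x, hx, y, hy, rfl⟩
  exact (mul_comm y x).subst (hy.2 x hx)

lemma nonempty_of_tM_nonempty {X : Set (FractionRing D)} (h : (tM D Q X).Nonempty) :
    X.Nonempty := by
  obtain ⟨_, E, hEX, -, hE, -⟩ := h
  exact hE.mono hEX

section IsPrime

variable [hQ : Q.IsPrime]

lemma mul_mem_quotM {x y : FractionRing D} (hx : x ∈ quotM D Q) (hy : y ∈ quotM D Q) :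
    x * y ∈ quotM D Q := by
  obtain ⟨a, b, ha, hb, rfl⟩ := hx
  obtain ⟨c, d, hc, hd, rfl⟩ := hy
  exact ⟨a * c, b * d, hQ.mul_notMem ha hc, hQ.mul_notMem hb hd, by
    rw [map_mul, map_mul, div_mul_div_comm]⟩

lemma quotM_inter_one :
    quotM D Q ∩ (1 : Submodule D (FractionRing D)) = monoidMK D Q := by
  ext x
  constructor
  · rintro ⟨⟨a, b, ha, hb, rfl⟩, h⟩
    obtain ⟨d, hd⟩ := Submodule.mem_one.1 h
    refine ⟨d, fun hdQ => ha ?_, hd.symm⟩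
    rw [eq_div_iff (algebraMap_ne_zero_of_notMem hb), ← map_mul] at hd
    exact IsFractionRing.injective D (FractionRing D) hd ▸ Q.mul_mem_right b hdQ
  · rintro ⟨a, ha, rfl⟩
    exact ⟨⟨a, 1, ha, hQ.one_notMem, by rw [map_one, div_one]⟩, Submodule.mem_one.2 ⟨a, rfl⟩⟩

lemma monoidMK_subset_quotM : monoidMK D Q ⊆ quotM D Q :=
  quotM_inter_one.symm.subset.trans Set.inter_subset_left

lemma invM_eq_quotM_inter {X : Set (FractionRing D)} (hX : X ⊆ quotM D Q) :
    invM D Q X = quotM D Q ∩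
      ((1 / Submodule.span D X : Submodule D (FractionRing D)) : Set (FractionRing D)) := by
  ext x
  refine and_congr_right fun hx => Iff.trans (forall₂_congr fun y hy => ?_) mem_div_span_iff.symm
  rw [← quotM_inter_one]
  exact and_iff_right (mul_mem_quotM hx (hX hy))

lemma mem_quotM_or_add_mem_quotM {x y u : FractionRing D} (hy : y ∈ quotM D Q)
    (hu : u ∈ quotM D Q) (hxy : x * y ∈ (1 : Submodule D (FractionRing D))) :
    x ∈ quotM D Q ∨ x + u ∈ quotM D Q := by
  obtain ⟨a, b, ha, hb, rfl⟩ := hy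
  obtain ⟨c, e, hc, he, rfl⟩ := hu
  obtain ⟨d, hd⟩ := Submodule.mem_one.1 hxy
  have ha' := algebraMap_ne_zero_of_notMem ha
  have hx : x = algebraMap D (FractionRing D) (d * b) / algebraMap D (FractionRing D) a := by
    have hb' := algebraMap_ne_zero_of_notMem hb
    rw [map_mul, hd]
    field_simp
  by_cases hdb : d * b ∈ Q
  · refine .inr ⟨d * b * e + a * c, a * e, ?_, hQ.mul_notMem ha he, ?_⟩
    · rw [Q.add_mem_iff_right (Q.mul_mem_right e hdb)]
      exact hQ.mul_notMem ha hc
    · rw [hx, div_add_div _ _ ha' (algebraMap_ne_zero_of_notMem he)]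
      simp only [map_add, map_mul]
  · exact .inl ⟨d * b, a, hdb, ha, hx⟩

lemma one_div_span_eq_span_invM {X : Set (FractionRing D)} (hX : X ⊆ quotM D Q)
    (hne : X.Nonempty) (hinv : (invM D Q X).Nonempty) :
    1 / Submodule.span D X = Submodule.span D (invM D Q X) := by
  have hX_inv := invM_eq_quotM_inter hX
  refine le_antisymm (fun x hx => ?_) ?_
  · obtain ⟨y, hy⟩ := hne
    obtain ⟨u, hu⟩ := hinv
    have hu' := hX_inv.subset hu
    obtain hxq | hxuq := mem_quotM_or_add_mem_quotM (hX hy) hu'.1 (mem_div_span_iff.1 hx y hy)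
    · exact Submodule.subset_span (hX_inv.superset ⟨hxq, hx⟩)
    · have hxu : x + u ∈ invM D Q X := hX_inv.superset ⟨hxuq, add_mem hx hu'.2⟩
      exact (Submodule.add_mem_iff_left _ (Submodule.subset_span hu)).1
        (Submodule.subset_span hxu)
  · rw [Submodule.span_le, hX_inv]
    exact Set.inter_subset_right

lemma exists_monoidMK_mul_mem_monoidMK {E : Set (FractionRing D)} (hE : E.Finite)
    (hEq : E ⊆ quotM D Q) : ∃ c ∈ monoidMK D Q, ∀ y ∈ E, c * y ∈ monoidMK D Q := by
  induction E, hE using Set.Finite.induction_on with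
  | empty => exact ⟨1, one_mem_monoidMK, fun _ h => h.elim⟩
  | @insert x E _ _ ih =>
    rw [Set.insert_subset_iff] at hEq
    obtain ⟨⟨a, b, ha, hb, rfl⟩, hEq⟩ := hEq
    obtain ⟨c, hc, hcE⟩ := ih hEq
    have hbM : algebraMap D (FractionRing D) b ∈ monoidMK D Q := ⟨b, hb, rfl⟩
    refine ⟨c * algebraMap D (FractionRing D) b, mul_mem_monoidMK hc hbM, ?_⟩
    rintro y (rfl | hy)
    · rw [mul_assoc, mul_div_cancel₀ _ (algebraMap_ne_zero_of_notMem hb)]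
      exact mul_mem_monoidMK hc ⟨a, ha, rfl⟩
    · rw [mul_right_comm]
      exact mul_mem_monoidMK (hcE y hy) hbM

lemma invM_nonempty_of_finite {E : Set (FractionRing D)} (hE : E.Finite)
    (hEq : E ⊆ quotM D Q) : (invM D Q E).Nonempty := by
  obtain ⟨c, hc, hcE⟩ := exists_monoidMK_mul_mem_monoidMK hE hEq
  exact ⟨c, monoidMK_subset_quotM hc, hcE⟩

lemma invM_invM_eq_quotM_inter {X : Set (FractionRing D)} (hX : X ⊆ quotM D Q)
    (hne : X.Nonempty) (hinv : (invM D Q X).Nonempty) :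
    invM D Q (invM D Q X) = quotM D Q ∩
      ((1 / (1 / Submodule.span D X) : Submodule D (FractionRing D)) :
        Set (FractionRing D)) := by
  rw [invM_eq_quotM_inter (invM_subset_quotM X), one_div_span_eq_span_invM hX hne hinv]

lemma tM_eq_quotM_inter_tD_span {X : Set (FractionRing D)} (hX : X ⊆ quotM D Q) :
    tM D Q X = quotM D Q ∩ tD D (Submodule.span D X) := by
  have invM_invM_eq {E : Set (FractionRing D)} (hEX : E ⊆ X) (hE : E.Finite) (hne : E.Nonempty) :=
    invM_invM_eq_quotM_inter (hEX.trans hX) hne (invM_nonempty_of_finite hE (hEX.trans hX))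
  ext x
  constructor
  · rintro ⟨E, hEX, hE, hne, hx⟩
    obtain ⟨e, he⟩ := hne
    have hspan : Submodule.span D E ≠ ⊥ :=
      (Submodule.ne_bot_iff _).2 ⟨e, Submodule.subset_span he, ne_zero_of_mem_quotM (hX (hEX he))⟩
    rw [invM_invM_eq hEX hE ⟨e, he⟩] at hx
    exact ⟨hx.1, _, Submodule.fg_span hE, hspan, Submodule.span_mono hEX, hx.2⟩
  · rintro ⟨hxq, B, hfg, hB, hBX, hx⟩
    obtain ⟨E, hEX, hBE⟩ := exists_finset_subset_le_span hfg hBX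
    have hne : (E : Set (FractionRing D)).Nonempty :=
      nonempty_of_span_ne_bot (ne_bot_of_le_ne_bot hB hBE)
    refine ⟨E, hEX, E.finite_toSet, hne, ?_⟩
    rw [invM_invM_eq hEX E.finite_toSet hne]
    exact ⟨hxq, submodule_div_le_div_left (submodule_div_le_div_left hBE 1) 1 hx⟩

lemma tM_mul_invM_eq_quotM_inter_tD {J : Set (FractionRing D)} (hJ : J ⊆ quotM D Q)
    (hne : J.Nonempty) (hinv : (invM D Q J).Nonempty) :
    tM D Q (J * invM D Q J) =
      quotM D Q ∩ tD D (Submodule.span D J * (1 / Submodule.span D J)) := by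
  rw [tM_eq_quotM_inter_tD_span ((mul_invM_subset_monoidMK J).trans monoidMK_subset_quotM),
    one_div_span_eq_span_invM hJ hne hinv, Submodule.span_mul_span]

/- A finitely generated `B ⊆ (JD)(JD)⁻¹` with `B_v ∋ 1` only involves a finite `E ⊆ J`, and
every element of `E⁻¹` then lies in `J⁻¹`. -/
lemma invM_nonempty_of_one_mem_tD {J : Set (FractionRing D)} (hJ : J ⊆ quotM D Q)
    (h : 1 ∈ tD D (Submodule.span D J * (1 / Submodule.span D J))) : (invM D Q J).Nonempty := by
  obtain ⟨B, hfg, -, hBJ, hB⟩ := one_mem_tD_iff.1 h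
  obtain ⟨E, hEJ, hBE⟩ := exists_finset_subset_le_span_mul hfg hBJ
  have hEq := hEJ.trans hJ
  obtain ⟨c, hc⟩ := invM_nonempty_of_finite E.finite_toSet hEq
  rw [invM_eq_quotM_inter hEq] at hc
  rw [invM_eq_quotM_inter hJ]
  refine ⟨c, hc.1, mem_div_span_iff.2 fun y hy => hB ?_⟩
  exact submodule_div_le_div_left hBE 1 (one_div_mul_one_div_le_one_div_mul
    (Submodule.mul_mem_mul hc.2 (le_one_div_one_div (Submodule.subset_span hy))))

theorem t_invertible_span_iff_t_invertible_general {J : Set (FractionRing D)}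
    (hJ : J ⊆ quotM D Q) :
    tD D (Submodule.span D J * (1 / Submodule.span D J)) =
      (1 : Submodule D (FractionRing D)) ↔
    tM D Q (J * invM D Q J) = monoidMK D Q := by
  rw [tD_eq_one_iff Submodule.mul_one_div_le_one]
  constructor
  · intro h
    have hne : J.Nonempty := nonempty_of_tD_span_mul_nonempty ⟨1, h⟩
    rw [tM_mul_invM_eq_quotM_inter_tD hJ hne (invM_nonempty_of_one_mem_tD hJ h),
      (tD_eq_one_iff Submodule.mul_one_div_le_one).2 h, quotM_inter_one]
  · intro h
    have hone : 1 ∈ tM D Q (J * invM D Q J) := h ▸ one_mem_monoidMK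
    obtain ⟨hne, hinv⟩ := Set.mul_nonempty.1 (nonempty_of_tM_nonempty ⟨1, hone⟩)
    rw [tM_mul_invM_eq_quotM_inter_tD hJ hne hinv] at hone
    exact hone.2

end IsPrime

end TInvertible

/-- **Lemma 3.1(5).** Let `D` be a domain with fraction field `K`, `Q` a prime ideal of `D`,
`M = D \ Q`, and `J` a fractional s-ideal of `M`. Then `JD` is `t`-invertible, i.e.
`((JD)·(JD)⁻¹)_t = D`, if and only if `J` is `t`-invertible, i.e. `(J·J⁻¹)_t = M`. -/
theorem t_invertible_span_iff_t_invertible (Q : Ideal D) (hQ : Q.IsPrime)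
    (J : Set (FractionRing D)) (hJ : IsFracSIdeal D Q J) :
    tD D (Submodule.span D J *
        ((1 : Submodule D (FractionRing D)) / Submodule.span D J)) =
      ((1 : Submodule D (FractionRing D)) : Set (FractionRing D)) ↔
    tM D Q (J * invM D Q J) = monoidMK D Q :=
  t_invertible_span_iff_t_invertible_general hJ.2.1

end
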